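/- Let (Ω_n, P_n, π_n) be a sequence of finite irreducible reversible Markov chains. If the sequence exhibits an averaged cutoff with a cutoff window w_n, then it exhibits a continuous-time cutoff with cutoff window w'_n := max(w_n, √(t_c^{(n)}(1/4))). -/

import Mathlib

open Matrix Filter Asymptotics

/-- `P` is a stochastic matrix. -/
def IsStochastic {Ω : Type*} [Fintype Ω] (P : Matrix Ω Ω ℝ) : Prop :=
  (∀ x y, 0 ≤ P x y) ∧ ∀ x, ∑ y, P x y = 1

/-- `P` is irreducible. -/
def IsIrreducibleMatrix {Ω : Type*} [Fintype Ω] [DecidableEq Ω] (P : Matrix Ω Ω ℝ) : Prop :=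
  ∀ x y, ∃ n : ℕ, 0 < (P ^ n) x y

/-- `μ` is a probability vector. -/
def IsProbVec {Ω : Type*} [Fintype Ω] (μ : Ω → ℝ) : Prop :=
  (∀ x, 0 ≤ μ x) ∧ ∑ x, μ x = 1

/-- The chain `(P, pi)` is reversible. -/
def IsReversible {Ω : Type*} [Fintype Ω] (P : Matrix Ω Ω ℝ) (pi : Ω → ℝ) : Prop :=
  ∀ x y, pi x * P x y = pi y * P y x

/-- A finite irreducible Markov chain `P` with stationary distribution `pi`. -/
def IsMC {Ω : Type*} [Fintype Ω] [DecidableEq Ω] (P : Matrix Ω Ω ℝ) (pi : Ω → ℝ) : Prop :=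
  IsStochastic P ∧ IsIrreducibleMatrix P ∧ IsProbVec pi ∧ pi ᵥ* P = pi

/-- A finite irreducible reversible Markov chain `P` with stationary distribution `pi`. -/
def IsRevMC {Ω : Type*} [Fintype Ω] [DecidableEq Ω] (P : Matrix Ω Ω ℝ) (pi : Ω → ℝ) : Prop :=
  IsMC P pi ∧ IsReversible P pi

/-- Total-variation distance between two measures on a finite set. -/
noncomputable def tvDist {Ω : Type*} [Fintype Ω] (μ ν : Ω → ℝ) : ℝ :=
  (∑ x, |μ x - ν x|) / 2

/-- The lazy version `(I + P)/2` of `P`. -/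
noncomputable def lazyM {Ω : Type*} [Fintype Ω] [DecidableEq Ω] (P : Matrix Ω Ω ℝ) :
    Matrix Ω Ω ℝ :=
  (2 : ℝ)⁻¹ • (1 + P)

/-- `d_c(t, μ)`: TV distance from stationarity of the continuous-time chain at time `t`,
started from `μ`. -/
noncomputable def contDist {Ω : Type*} [Fintype Ω] [DecidableEq Ω] (P : Matrix Ω Ω ℝ) (pi : Ω → ℝ)
    (t : ℝ) (μ : Ω → ℝ) : ℝ :=
  tvDist (fun y => ∑' k : ℕ, Real.exp (-t) * t ^ k / (Nat.factorial k) * (μ ᵥ* (P ^ k)) y) pi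

/-- `d_L(t, μ)`: TV distance from stationarity of the lazy chain at (discrete) time `t`,
started from `μ`. -/
noncomputable def lazyDist {Ω : Type*} [Fintype Ω] [DecidableEq Ω] (P : Matrix Ω Ω ℝ)
    (pi : Ω → ℝ) (t : ℝ) (μ : Ω → ℝ) : ℝ :=
  tvDist (μ ᵥ* (lazyM P ^ ⌊t⌋₊)) pi

/-- `d_ave(t, μ)`: TV distance from stationarity of the averaged chain at (discrete) time `t`,
started from `μ`. -/
noncomputable def aveDist {Ω : Type*} [Fintype Ω] [DecidableEq Ω] (P : Matrix Ω Ω ℝ) (pi : Ω → ℝ)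
    (t : ℝ) (μ : Ω → ℝ) : ℝ :=
  tvDist (fun y => ((μ ᵥ* (P ^ ⌊t⌋₊)) y + (μ ᵥ* (P ^ (⌊t⌋₊ + 1))) y) / 2) pi

/-- The point mass at `x`. -/
noncomputable def deltaMass {Ω : Type*} [DecidableEq Ω] (x : Ω) : Ω → ℝ :=
  fun y => if y = x then 1 else 0

/-- Worst-case continuous-time distance `d_c(t)`. -/
noncomputable def contDistMax {Ω : Type*} [Fintype Ω] [DecidableEq Ω] (P : Matrix Ω Ω ℝ)
    (pi : Ω → ℝ) (t : ℝ) : ℝ :=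
  ⨆ x : Ω, contDist P pi t (deltaMass x)

/-- Worst-case lazy distance `d_L(t)`. -/
noncomputable def lazyDistMax {Ω : Type*} [Fintype Ω] [DecidableEq Ω] (P : Matrix Ω Ω ℝ)
    (pi : Ω → ℝ) (t : ℝ) : ℝ :=
  ⨆ x : Ω, lazyDist P pi t (deltaMass x)

/-- Worst-case averaged distance `d_ave(t)`. -/
noncomputable def aveDistMax {Ω : Type*} [Fintype Ω] [DecidableEq Ω] (P : Matrix Ω Ω ℝ)
    (pi : Ω → ℝ) (t : ℝ) : ℝ :=
  ⨆ x : Ω, aveDist P pi t (deltaMass x)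

/-- `φ_{α,C}(t) = t + ⌈C t^{(1+2α)/2} √(α log t)⌉`. -/
noncomputable def phiAC (α C t : ℝ) : ℝ :=
  t + ((⌈C * t ^ ((1 + 2 * α) / 2) * Real.sqrt (α * Real.log t)⌉ : ℤ) : ℝ)

/-- `ψ_{α,C}(x) = min (1, x + C |log(2x)|^{-α})`. -/
noncomputable def psiAC (α C x : ℝ) : ℝ :=
  min 1 (x + C * |Real.log (2 * x)| ^ (-α))

/-- `t_c(ε)`, the `ε`-mixing time of the continuous-time chain. -/
noncomputable def contMix {Ω : Type*} [Fintype Ω] [DecidableEq Ω] (P : Matrix Ω Ω ℝ)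
    (pi : Ω → ℝ) (ε : ℝ) : ℝ :=
  sInf {t : ℝ | 0 ≤ t ∧ contDistMax P pi t ≤ ε}

/-- `t_L(ε)`, the `ε`-mixing time of the lazy chain. -/
noncomputable def lazyMix {Ω : Type*} [Fintype Ω] [DecidableEq Ω] (P : Matrix Ω Ω ℝ)
    (pi : Ω → ℝ) (ε : ℝ) : ℕ :=
  sInf {t : ℕ | lazyDistMax P pi t ≤ ε}

/-- `t_ave(ε)`, the `ε`-mixing time of the averaged chain. -/
noncomputable def aveMix {Ω : Type*} [Fintype Ω] [DecidableEq Ω] (P : Matrix Ω Ω ℝ)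
    (pi : Ω → ℝ) (ε : ℝ) : ℕ :=
  sInf {t : ℕ | aveDistMax P pi t ≤ ε}

/-- The sequence of continuous-time chains exhibits cutoff. -/
def ContCutoff {Ω : ℕ → Type} [∀ n, Fintype (Ω n)] [∀ n, DecidableEq (Ω n)]
    (P : ∀ n, Matrix (Ω n) (Ω n) ℝ) (pi : ∀ n, Ω n → ℝ) : Prop :=
  ∀ ε : ℝ, 0 < ε → ε < 1 →
    Tendsto (fun n => contMix (P n) (pi n) ε / contMix (P n) (pi n) (1 - ε)) atTop (nhds 1)

/-- The sequence of lazy chains exhibits cutoff. -/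
def LazyCutoff {Ω : ℕ → Type} [∀ n, Fintype (Ω n)] [∀ n, DecidableEq (Ω n)]
    (P : ∀ n, Matrix (Ω n) (Ω n) ℝ) (pi : ∀ n, Ω n → ℝ) : Prop :=
  ∀ ε : ℝ, 0 < ε → ε < 1 →
    Tendsto (fun n => (lazyMix (P n) (pi n) ε : ℝ) / (lazyMix (P n) (pi n) (1 - ε) : ℝ))
      atTop (nhds 1)

/-- The sequence of averaged chains exhibits cutoff. -/
def AveCutoff {Ω : ℕ → Type} [∀ n, Fintype (Ω n)] [∀ n, DecidableEq (Ω n)]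
    (P : ∀ n, Matrix (Ω n) (Ω n) ℝ) (pi : ∀ n, Ω n → ℝ) : Prop :=
  ∀ ε : ℝ, 0 < ε → ε < 1 →
    Tendsto (fun n => (aveMix (P n) (pi n) ε : ℝ) / (aveMix (P n) (pi n) (1 - ε) : ℝ))
      atTop (nhds 1)

/-- The sequence of continuous-time chains exhibits cutoff with window `w`. -/
def ContCutoffWindow {Ω : ℕ → Type} [∀ n, Fintype (Ω n)] [∀ n, DecidableEq (Ω n)]
    (P : ∀ n, Matrix (Ω n) (Ω n) ℝ) (pi : ∀ n, Ω n → ℝ) (w : ℕ → ℝ) : Prop :=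
  ContCutoff P pi ∧
  (fun n => w n) =o[atTop] (fun n => contMix (P n) (pi n) (1 / 4)) ∧
  ∀ ε : ℝ, 0 < ε → ε ≤ 1 / 4 → ∃ Cε : ℝ, 0 < Cε ∧
    ∀ n, contMix (P n) (pi n) ε - contMix (P n) (pi n) (1 - ε) ≤ Cε * w n

/-- The sequence of averaged chains exhibits cutoff with window `w`. -/
def AveCutoffWindow {Ω : ℕ → Type} [∀ n, Fintype (Ω n)] [∀ n, DecidableEq (Ω n)]
    (P : ∀ n, Matrix (Ω n) (Ω n) ℝ) (pi : ∀ n, Ω n → ℝ) (w : ℕ → ℝ) : Prop :=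
  AveCutoff P pi ∧
  (fun n => w n) =o[atTop] (fun n => (aveMix (P n) (pi n) (1 / 4) : ℝ)) ∧
  ∀ ε : ℝ, 0 < ε → ε ≤ 1 / 4 → ∃ Cε : ℝ, 0 < Cε ∧
    ∀ n, (aveMix (P n) (pi n) ε : ℝ) - (aveMix (P n) (pi n) (1 - ε) : ℝ) ≤ Cε * w n

/-- Poisson weights. -/
noncomputable def pw (t : ℝ) (k : ℕ) : ℝ := Real.exp (-t) * t ^ k / (Nat.factorial k)

lemma pw_nonneg {t : ℝ} (ht : 0 ≤ t) (k : ℕ) : 0 ≤ pw t k := by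
  unfold pw; positivity

lemma pw_hasSum (t : ℝ) : HasSum (pw t) 1 := by
  have h := (NormedSpace.expSeries_div_hasSum_exp (𝔸 := ℝ) t).mul_left (Real.exp (-t))
  rw [← Real.exp_eq_exp_ℝ, ← Real.exp_add] at h
  simp only [neg_add_cancel, Real.exp_zero] at h
  have e : pw t = fun k => Real.exp (-t) * (t ^ k / (Nat.factorial k)) := by
    funext k; unfold pw; ring
  rw [e]; exact h

lemma pw_succ (t : ℝ) (k : ℕ) : pw t (k + 1) * ((k : ℝ) + 1) = t * pw t k := by
  unfold pw
  rw [Nat.factorial_succ]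
  push_cast
  have : ((k : ℝ) + 1) ≠ 0 := by positivity
  have : (Nat.factorial k : ℝ) ≠ 0 := by positivity
  field_simp
  ring

/-- Shift identity for Poisson sums. -/
lemma pw_shift {t : ℝ} {F : ℕ → ℝ} {s : ℝ} (h : HasSum (fun k => pw t k * F (k + 1)) s) :
    HasSum (fun k => pw t k * ((k : ℝ) * F k)) (t * s) := by
  rw [← hasSum_nat_add_iff' 1]
  simp only [Finset.range_one, Finset.sum_singleton, Nat.cast_zero, zero_mul, mul_zero, sub_zero]
  have h2 := h.mul_left t
  have e : (fun k : ℕ => pw t (k + 1) * (((k + 1 : ℕ) : ℝ) * F (k + 1)))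
      = fun k => t * (pw t k * F (k + 1)) := by
    funext k
    rw [← mul_assoc t, ← pw_succ]
    push_cast
    ring
  rw [e]; exact h2

lemma pw_mean (t : ℝ) : HasSum (fun k => pw t k * (k : ℝ)) t := by
  have h := pw_shift (t := t) (F := fun _ => 1) (s := 1) (by simpa using pw_hasSum t)
  simpa using h

lemma pw_var (t : ℝ) : HasSum (fun k => pw t k * ((k : ℝ) - t) ^ 2) t := by
  have h1 := pw_mean t
  have h0 := pw_hasSum t
  have h2 := pw_shift (t := t) (F := fun k => (k : ℝ)) (s := t + 1) (by
    have := h1.add h0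
    have e : (fun k : ℕ => pw t k * ((k + 1 : ℕ) : ℝ)) = fun k => pw t k * (k : ℝ) + pw t k := by
      funext k; push_cast; ring
    rw [e]; exact this)
  have h3 := (h2.sub (h1.mul_left (2 * t))).add (h0.mul_left (t ^ 2))
  have e : (fun k : ℕ => pw t k * ((k : ℝ) - t) ^ 2)
      = fun k => pw t k * ((k : ℝ) * (k : ℝ)) - 2 * t * (pw t k * (k : ℝ)) + t ^ 2 * pw t k := by
    funext k; ring
  have e2 : t * (t + 1) - 2 * t * t + t ^ 2 * 1 = t := by ring
  rw [e]; rw [e2] at h3; exact h3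

lemma pw_summable {t : ℝ} (ht : 0 ≤ t) {F : ℕ → ℝ} {M : ℝ} (hF : ∀ k, |F k| ≤ M) :
    Summable (fun k => pw t k * F k) := by
  refine Summable.of_norm_bounded (g := fun k => pw t k * M) ((pw_hasSum t).summable.mul_right M) ?_
  intro k
  rw [Real.norm_eq_abs, abs_mul, abs_of_nonneg (pw_nonneg ht k)]
  exact mul_le_mul_of_nonneg_left (hF k) (pw_nonneg ht k)

/-- Chebyshev in functional form. -/
lemma pw_cheb {t a : ℝ} (ht : 0 ≤ t) (ha : 0 < a) {F : ℕ → ℝ} (hF0 : ∀ k, 0 ≤ F k)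
    (hF1 : ∀ k, F k ≤ 1) (hF : ∀ k : ℕ, |(k : ℝ) - t| < a → F k = 0) :
    ∑' k, pw t k * F k ≤ t / a ^ 2 := by
  have hs := pw_summable ht (F := F) (M := 1) (fun k => by
    rw [abs_of_nonneg (hF0 k)]; exact hF1 k)
  have hv := (pw_var t).div_const (a ^ 2)
  refine hasSum_le ?_ hs.hasSum hv
  intro k
  have hp := pw_nonneg ht k
  rw [mul_div_assoc]
  refine mul_le_mul_of_nonneg_left ?_ hp
  by_cases hk : |(k : ℝ) - t| < a
  · rw [hF k hk]; positivity
  · push Not at hk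
    refine (hF1 k).trans ?_
    rw [le_div_iff₀ (by positivity), one_mul, ← sq_abs ((k : ℝ) - t)]
    exact pow_le_pow_left₀ ha.le hk 2

set_option linter.unusedSectionVars false

section chain

variable {Ω : Type*} [Fintype Ω] [DecidableEq Ω] {P : Matrix Ω Ω ℝ} {pi : Ω → ℝ}

lemma pow_stoch (h : IsStochastic P) (k : ℕ) : IsStochastic (P ^ k) := by
  induction k with
  | zero =>
    refine ⟨fun x y => ?_, fun x => ?_⟩
    · rw [pow_zero, Matrix.one_apply]; split_ifs <;> norm_num
    · simp [Matrix.one_apply]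
  | succ k ih =>
    refine ⟨fun x y => ?_, fun x => ?_⟩
    · rw [pow_succ, Matrix.mul_apply]
      exact Finset.sum_nonneg fun z _ => mul_nonneg (ih.1 _ _) (h.1 _ _)
    · simp only [pow_succ, Matrix.mul_apply]
      rw [Finset.sum_comm]
      simp only [← Finset.mul_sum, h.2, mul_one, ih.2]

lemma stoch_le_one (h : IsStochastic P) (x y : Ω) : P x y ≤ 1 := by
  rw [← h.2 x]
  exact Finset.single_le_sum (f := fun y => P x y) (fun z _ => h.1 x z) (Finset.mem_univ y)

lemma deltaMass_vecMul (x : Ω) (M : Matrix Ω Ω ℝ) (y : Ω) : (deltaMass x ᵥ* M) y = M x y := by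
  simp [Matrix.vecMul, dotProduct, deltaMass]

lemma stat_pow (h : pi ᵥ* P = pi) (k : ℕ) : pi ᵥ* (P ^ k) = pi := by
  induction k with
  | zero => simp
  | succ k ih => rw [pow_succ, ← Matrix.vecMul_vecMul, ih, h]

/-- Averaged kernel. -/
noncomputable def aK (P : Matrix Ω Ω ℝ) (k : ℕ) (x y : Ω) : ℝ :=
  ((P ^ k) x y + (P ^ (k + 1)) x y) / 2

/-- Heat kernel. -/
noncomputable def hK (P : Matrix Ω Ω ℝ) (t : ℝ) (x y : Ω) : ℝ :=
  ∑' k : ℕ, pw t k * (P ^ k) x y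

lemma contDist_eq (t : ℝ) (x : Ω) :
    contDist P pi t (deltaMass x) = tvDist (hK P t x) pi := by
  unfold contDist hK pw
  simp only [deltaMass_vecMul]

lemma aveDist_eq (k : ℕ) (x : Ω) :
    aveDist P pi (k : ℝ) (deltaMass x) = tvDist (aK P k x) pi := by
  unfold aveDist aK
  simp only [deltaMass_vecMul, Nat.floor_natCast]

lemma aK_prob (h : IsStochastic P) (k : ℕ) (x : Ω) : IsProbVec (aK P k x) := by
  have h1 := pow_stoch h k
  have h2 := pow_stoch h (k + 1)
  refine ⟨fun y => ?_, ?_⟩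
  · have := h1.1 x y
    have := h2.1 x y
    unfold aK; positivity
  · unfold aK
    rw [← Finset.sum_div, Finset.sum_add_distrib, h1.2, h2.2]; norm_num

lemma stoch_abs_le (h : IsStochastic P) (k : ℕ) (x y : Ω) : |(P ^ k) x y| ≤ 1 := by
  have h1 := pow_stoch h k
  rw [abs_of_nonneg (h1.1 x y)]; exact stoch_le_one h1 x y

lemma hK_hasSum (h : IsStochastic P) {t : ℝ} (ht : 0 ≤ t) (x y : Ω) :
    HasSum (fun k => pw t k * (P ^ k) x y) (hK P t x y) :=
  (pw_summable ht (fun k => stoch_abs_le h k x y)).hasSum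

lemma hK_prob (h : IsStochastic P) {t : ℝ} (ht : 0 ≤ t) (x : Ω) : IsProbVec (hK P t x) := by
  refine ⟨fun y => tsum_nonneg fun k => mul_nonneg (pw_nonneg ht k) ((pow_stoch h k).1 x y), ?_⟩
  have h1 := hasSum_sum (s := Finset.univ) (fun y _ => hK_hasSum h ht x y)
  have h2 := pw_hasSum t
  have e : (fun k => ∑ y, pw t k * (P ^ k) x y) = pw t := by
    funext k; rw [← Finset.mul_sum, (pow_stoch h k).2, mul_one]
  rw [e] at h1
  exact h1.unique h2

lemma tv_eq {μ ν : Ω → ℝ} (hμ : IsProbVec μ) (hν : IsProbVec ν) :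
    tvDist μ ν = 1 - ∑ x, min (μ x) (ν x) := by
  unfold tvDist
  have e : ∀ x, |μ x - ν x| = μ x + ν x - 2 * min (μ x) (ν x) := by
    intro x
    rcases le_total (μ x) (ν x) with h | h
    · rw [min_eq_left h, abs_of_nonpos (by linarith)]; ring
    · rw [min_eq_right h, abs_of_nonneg (by linarith)]; ring
  simp only [e]
  rw [Finset.sum_sub_distrib, Finset.sum_add_distrib, hμ.2, hν.2, ← Finset.mul_sum]
  ring

lemma tv_le_one {μ ν : Ω → ℝ} (hμ : IsProbVec μ) (hν : IsProbVec ν) : tvDist μ ν ≤ 1 := by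
  rw [tv_eq hμ hν]
  have : 0 ≤ ∑ x, min (μ x) (ν x) := Finset.sum_nonneg fun x _ => le_min (hμ.1 x) (hν.1 x)
  linarith

lemma tv_nonneg (μ ν : Ω → ℝ) : 0 ≤ tvDist μ ν := by
  unfold tvDist; positivity

lemma tv_contract (h : IsStochastic P) (μ ν : Ω → ℝ) :
    tvDist (μ ᵥ* P) (ν ᵥ* P) ≤ tvDist μ ν := by
  unfold tvDist
  refine div_le_div_of_nonneg_right ?_ (by norm_num)
  calc ∑ y, |(μ ᵥ* P) y - (ν ᵥ* P) y| ≤ ∑ y, ∑ x, |μ x - ν x| * P x y := by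
        refine Finset.sum_le_sum fun y _ => ?_
        have e : (μ ᵥ* P) y - (ν ᵥ* P) y = ∑ x, (μ x - ν x) * P x y := by
          simp only [Matrix.vecMul, dotProduct]
          rw [← Finset.sum_sub_distrib]
          exact Finset.sum_congr rfl fun x _ => by ring
        rw [e]
        refine (Finset.abs_sum_le_sum_abs _ _).trans (le_of_eq ?_)
        exact Finset.sum_congr rfl fun x _ => by rw [abs_mul, abs_of_nonneg (h.1 x y)]
    _ = ∑ x, |μ x - ν x| := by
        rw [Finset.sum_comm]
        simp only [← Finset.mul_sum, h.2, mul_one]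

lemma aK_succ (k : ℕ) (x : Ω) : aK P (k + 1) x = aK P k x ᵥ* P := by
  funext y
  unfold aK
  simp only [Matrix.vecMul, dotProduct]
  rw [pow_succ P (k + 1), Matrix.mul_apply]
  nth_rewrite 1 [pow_succ P k]
  rw [Matrix.mul_apply, ← Finset.sum_add_distrib, Finset.sum_div]
  exact Finset.sum_congr rfl fun z _ => by ring

lemma ave_mono (h : IsStochastic P) (hpi : pi ᵥ* P = pi) (x : Ω) :
    Antitone (fun k => tvDist (aK P k x) pi) := by
  refine antitone_nat_of_succ_le fun k => ?_
  have := tv_contract h (aK P k x) pi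
  rw [hpi, ← aK_succ] at this
  exact this

lemma pw_tri {t : ℝ} (ht : 0 ≤ t) {G : ℕ → Ω → ℝ} {L : ℕ → ℝ}
    (hL : Summable (fun k => pw t k * L k)) (hG : ∀ k, ∑ y, |G k y| ≤ L k) :
    ∑ y, |∑' k, pw t k * G k y| ≤ ∑' k, pw t k * L k := by
  have hb : ∀ k y, |G k y| ≤ L k := fun k y =>
    (Finset.single_le_sum (f := fun y => |G k y|) (fun z _ => abs_nonneg _)
      (Finset.mem_univ y)).trans (hG k)
  have hs : ∀ y, Summable (fun k => |pw t k * G k y|) := fun y => by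
    refine Summable.of_nonneg_of_le (fun k => abs_nonneg _) (fun k => ?_) hL
    rw [abs_mul, abs_of_nonneg (pw_nonneg ht k)]
    exact mul_le_mul_of_nonneg_left (hb k y) (pw_nonneg ht k)
  calc ∑ y, |∑' k, pw t k * G k y| ≤ ∑ y, ∑' k, |pw t k * G k y| := by
        refine Finset.sum_le_sum fun y _ => ?_
        have := norm_tsum_le_tsum_norm (f := fun k => pw t k * G k y) (by simpa using hs y)
        simpa using this
    _ ≤ _ := by
        have h1 := hasSum_sum (s := Finset.univ) (fun y _ => (hs y).hasSum)
        refine hasSum_le ?_ h1 hL.hasSum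
        intro k
        simp only [abs_mul, abs_of_nonneg (pw_nonneg ht k)]
        rw [← Finset.mul_sum]
        exact mul_le_mul_of_nonneg_left (hG k) (pw_nonneg ht k)

/-- Poisson versus shifted Poisson. -/
lemma shift_bound (h : IsStochastic P) {t : ℝ} (ht : 0 < t) (x : Ω) :
    ∑ y, |∑' k, pw t k * ((P ^ k) x y - (P ^ (k + 1)) x y)| ≤ 1 / √t := by
  have e : ∀ y, ∑' k, pw t k * ((P ^ k) x y - (P ^ (k + 1)) x y)
      = ∑' k, pw t k * ((1 - k / t) * (P ^ k) x y) := by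
    intro y
    have h1 := hK_hasSum h ht.le x y
    have h2 := (pw_summable ht.le (fun k => stoch_abs_le h (k + 1) x y)).hasSum
    have h3 := pw_shift (F := fun k => (P ^ k) x y) h2
    have h4 := h1.sub h2
    have h5 := h1.sub (h3.div_const t)
    rw [mul_div_cancel_left₀ _ ht.ne'] at h5
    have e1 : (fun k => pw t k * ((P ^ k) x y - (P ^ (k + 1)) x y))
        = fun k => pw t k * (P ^ k) x y - pw t k * (P ^ (k + 1)) x y := by
      funext k; ring
    have e2 : (fun k : ℕ => pw t k * ((1 - k / t) * (P ^ k) x y))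
        = fun k : ℕ => pw t k * (P ^ k) x y - pw t k * ((k : ℝ) * (P ^ k) x y) / t := by
      funext k; ring
    rw [e1, e2, h4.tsum_eq, h5.tsum_eq]
  simp only [e]
  have hst : 0 < √t := Real.sqrt_pos.2 ht
  have hsq : √t * √t = t := Real.mul_self_sqrt ht.le
  have hL : HasSum (fun k : ℕ => pw t k * ((√t * (1 - k / t) ^ 2 + 1 / √t) / 2)) (1 / √t) := by
    have h1 := (pw_var t).mul_left (√t / (2 * t ^ 2))
    have h2 := (pw_hasSum t).mul_left (1 / √t / 2)
    have h3 := h1.add h2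
    have e1 : (fun k : ℕ => pw t k * ((√t * (1 - k / t) ^ 2 + 1 / √t) / 2))
        = fun k : ℕ => √t / (2 * t ^ 2) * (pw t k * ((k : ℝ) - t) ^ 2) + 1 / √t / 2 * pw t k := by
      funext k
      have : (1 - (k : ℝ) / t) ^ 2 = ((k : ℝ) - t) ^ 2 / t ^ 2 := by
        rw [← div_pow, ← neg_sq]; congr 1; field_simp; ring
      rw [this]
      field_simp
    have e2 : √t / (2 * t ^ 2) * t + 1 / √t / 2 * 1 = 1 / √t := by
      field_simp
      nlinarith
    rw [e1]; rw [e2] at h3; exact h3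
  refine (pw_tri ht.le hL.summable ?_).trans_eq hL.tsum_eq
  intro k
  have e1 : ∀ y, |(1 - (k : ℝ) / t) * (P ^ k) x y| = |1 - (k : ℝ) / t| * (P ^ k) x y := fun y => by
    rw [abs_mul, abs_of_nonneg ((pow_stoch h k).1 x y)]
  simp only [e1]
  rw [← Finset.mul_sum, (pow_stoch h k).2, mul_one, ← sq_abs (1 - (k : ℝ) / t)]
  set u := |1 - (k : ℝ) / t|
  have : 0 ≤ (√t * u - 1) ^ 2 / √t := by positivity
  have e3 : (√t * u - 1) ^ 2 / √t = √t * u ^ 2 - 2 * u + 1 / √t := by field_simp; ring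
  linarith

lemma cont_le_ave (h : IsStochastic P) (hp : IsProbVec pi) (hpi : pi ᵥ* P = pi) (x : Ω)
    (s : ℕ) {t : ℝ} (hst : (s : ℝ) < t) :
    tvDist (hK P t x) pi ≤ tvDist (aK P s x) pi + t / (t - s) ^ 2 + 1 / √t := by
  have ht : 0 < t := lt_of_le_of_lt (Nat.cast_nonneg s) hst
  set d := tvDist (aK P s x) pi with hd
  have hd0 : 0 ≤ d := tv_nonneg _ _
  have hsplit : ∀ y, hK P t x y - pi y = (∑' k, pw t k * (aK P k x y - pi y))
      + (∑' k, pw t k * ((P ^ k) x y - (P ^ (k + 1)) x y)) / 2 := by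
    intro y
    have h1 := hK_hasSum h ht.le x y
    have h2 := (pw_summable ht.le (fun k => stoch_abs_le h (k + 1) x y)).hasSum
    have h0 := (pw_hasSum t).mul_right (pi y)
    have h3 := ((h1.add h2).div_const 2).sub h0
    have h4 := h1.sub h2
    have e1 : (fun k => pw t k * (aK P k x y - pi y)) = fun k =>
        (pw t k * (P ^ k) x y + pw t k * (P ^ (k + 1)) x y) / 2 - pw t k * pi y := by
      funext k; unfold aK; ring
    have e2 : (fun k => pw t k * ((P ^ k) x y - (P ^ (k + 1)) x y))
        = fun k => pw t k * (P ^ k) x y - pw t k * (P ^ (k + 1)) x y := by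
      funext k; ring
    rw [e1, e2, h3.tsum_eq, h4.tsum_eq]; ring
  let I : ℕ → ℝ := fun k => if k < s then 1 else 0
  have hI : ∑' k, pw t k * I k ≤ t / (t - s) ^ 2 := by
    refine pw_cheb ht.le (by linarith) (fun k => ?_) (fun k => ?_) (fun k hk => ?_)
    · simp only [I]; split_ifs <;> norm_num
    · simp only [I]; split_ifs <;> norm_num
    · simp only [I]
      rw [if_neg]
      intro hks
      have : (k : ℝ) < s := by exact_mod_cast hks
      rw [abs_lt] at hk
      linarith
  have hIs : Summable (fun k => pw t k * I k) := pw_summable ht.le (M := 1) (fun k => by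
    simp only [I]; split_ifs <;> norm_num)
  have hLs : HasSum (fun k => pw t k * (2 * (d + I k))) (2 * (d + ∑' k, pw t k * I k)) := by
    have h3 := (((pw_hasSum t).mul_right d).add hIs.hasSum).mul_left 2
    have e1 : (fun k => pw t k * (2 * (d + I k))) = fun k => 2 * (pw t k * d + pw t k * I k) := by
      funext k; ring
    rw [one_mul] at h3
    rw [e1]; exact h3
  have hA : ∑ y, |∑' k, pw t k * (aK P k x y - pi y)| ≤ 2 * (d + ∑' k, pw t k * I k) := by
    refine (pw_tri ht.le hLs.summable ?_).trans_eq hLs.tsum_eq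
    intro k
    have : ∑ y, |aK P k x y - pi y| = 2 * tvDist (aK P k x) pi := by unfold tvDist; ring
    rw [this]
    refine mul_le_mul_of_nonneg_left ?_ (by norm_num)
    simp only [I]
    split_ifs with hk
    · linarith [tv_le_one (aK_prob h k x) hp]
    · have := ave_mono h hpi x (not_lt.1 hk)
      simp only at this
      linarith
  have hB := shift_bound h ht x
  have : ∑ y, |hK P t x y - pi y| ≤ 2 * (d + ∑' k, pw t k * I k) + 1 / √t := by
    calc ∑ y, |hK P t x y - pi y| ≤ ∑ y, (|∑' k, pw t k * (aK P k x y - pi y)|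
          + |∑' k, pw t k * ((P ^ k) x y - (P ^ (k + 1)) x y)|) := by
          refine Finset.sum_le_sum fun y _ => ?_
          rw [hsplit]
          refine (abs_add_le _ _).trans ?_
          rw [abs_div, abs_two]
          have := abs_nonneg (∑' k, pw t k * ((P ^ k) x y - (P ^ (k + 1)) x y))
          linarith
      _ ≤ _ := by rw [Finset.sum_add_distrib]; exact add_le_add hA hB
  have h0 : 0 ≤ 1 / √t := by positivity
  unfold tvDist
  linarith

/-- Squared norm in `L^2(pi)`. -/
noncomputable def nrm (pi f : Ω → ℝ) : ℝ := ∑ x, pi x * f x ^ 2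

lemma nrm_nonneg (hp : IsProbVec pi) (f : Ω → ℝ) : 0 ≤ nrm pi f :=
  Finset.sum_nonneg fun x _ => mul_nonneg (hp.1 x) (sq_nonneg _)

lemma stat_sum (hpi : pi ᵥ* P = pi) (f : Ω → ℝ) : ∑ x, pi x * (P *ᵥ f) x = ∑ x, pi x * f x := by
  have h1 : pi ⬝ᵥ (P *ᵥ f) = (pi ᵥ* P) ⬝ᵥ f := Matrix.dotProduct_mulVec _ _ _
  rw [hpi] at h1
  exact h1

lemma mulVec_mono (h : IsStochastic P) {f g : Ω → ℝ} (hfg : ∀ y, f y ≤ g y) (x : Ω) :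
    (P *ᵥ f) x ≤ (P *ᵥ g) x :=
  Finset.sum_le_sum fun y _ => mul_le_mul_of_nonneg_left (hfg y) (h.1 x y)

lemma mulVec_const (h : IsStochastic P) (c : ℝ) (x : Ω) : (P *ᵥ fun _ => c) x = c := by
  simp only [Matrix.mulVec, dotProduct]
  rw [← Finset.sum_mul, h.2, one_mul]

lemma nrm_contract (h : IsStochastic P) (hp : IsProbVec pi) (hpi : pi ᵥ* P = pi) (f : Ω → ℝ) :
    nrm pi (P *ᵥ f) ≤ nrm pi f := by
  have key : ∀ x, (P *ᵥ f) x ^ 2 ≤ (P *ᵥ fun y => f y ^ 2) x := by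
    intro x
    set m := (P *ᵥ f) x with hm
    have h0 : 0 ≤ ∑ y, P x y * (f y - m) ^ 2 :=
      Finset.sum_nonneg fun y _ => mul_nonneg (h.1 x y) (sq_nonneg _)
    have e : ∑ y, P x y * (f y - m) ^ 2
        = (P *ᵥ fun y => f y ^ 2) x - 2 * m * (P *ᵥ f) x + m ^ 2 * ∑ y, P x y := by
      simp only [Matrix.mulVec, dotProduct]
      rw [Finset.mul_sum, Finset.mul_sum, ← Finset.sum_sub_distrib, ← Finset.sum_add_distrib]
      exact Finset.sum_congr rfl fun y _ => by ring
    rw [e, h.2, ← hm] at h0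
    nlinarith
  unfold nrm
  rw [← stat_sum hpi (fun y => f y ^ 2)]
  exact Finset.sum_le_sum fun x _ => mul_le_mul_of_nonneg_left (key x) (hp.1 x)

lemma selfadj (hr : IsReversible P pi) (f g : Ω → ℝ) :
    ∑ x, pi x * (f x * (P *ᵥ g) x) = ∑ x, pi x * ((P *ᵥ f) x * g x) := by
  simp only [Matrix.mulVec, dotProduct, Finset.mul_sum, Finset.sum_mul]
  rw [Finset.sum_comm]
  refine Finset.sum_congr rfl fun x _ => Finset.sum_congr rfl fun y _ => ?_
  have := hr x y
  linear_combination (-(f y * g x)) * this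

lemma nrm_second (hr : IsReversible P pi) (f : Ω → ℝ) :
    nrm pi (f - P *ᵥ (P *ᵥ f)) = nrm pi f - 2 * nrm pi (P *ᵥ f) + nrm pi (P *ᵥ (P *ᵥ f)) := by
  have h1 := selfadj hr f (P *ᵥ f)
  have e : nrm pi (P *ᵥ f) = ∑ x, pi x * ((P *ᵥ f) x * (P *ᵥ f) x) := by
    unfold nrm; exact Finset.sum_congr rfl fun x _ => by ring
  rw [e, ← h1]
  unfold nrm
  rw [Finset.mul_sum, ← Finset.sum_sub_distrib, ← Finset.sum_add_distrib]
  exact Finset.sum_congr rfl fun x _ => by simp only [Pi.sub_apply]; ring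

lemma seq_bound {u : ℕ → ℝ} (u0 : ∀ j, 0 ≤ u j) (u1 : ∀ j, u (j + 1) ≤ u j)
    (c0 : ∀ j, 0 ≤ u j - 2 * u (j + 1) + u (j + 2))
    (c1 : ∀ j, u (j + 1) - 2 * u (j + 2) + u (j + 3) ≤ u j - 2 * u (j + 1) + u (j + 2)) (k : ℕ) :
    (k : ℝ) ^ 2 * (u (2 * k) - 2 * u (2 * k + 1) + u (2 * k + 2)) ≤ u 0 := by
  let b : ℕ → ℝ := fun j => u j - u (j + 1)
  let c : ℕ → ℝ := fun j => u j - 2 * u (j + 1) + u (j + 2)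
  have hb : Antitone b := antitone_nat_of_succ_le fun j => by
    have := c0 j
    simp only [b]; linarith
  have hc : Antitone c := antitone_nat_of_succ_le fun j => c1 j
  have h1 : (k : ℝ) * b k ≤ u 0 := by
    have e : ∑ j ∈ Finset.range k, b j = u 0 - u k := Finset.sum_range_sub' u k
    have : (Finset.range k).card • b k ≤ ∑ j ∈ Finset.range k, b j :=
      Finset.card_nsmul_le_sum _ _ _ fun j hj => hb (Finset.mem_range.1 hj).le
    rw [Finset.card_range, nsmul_eq_mul] at this
    linarith [u0 k]
  have h2 : (k : ℝ) * c (2 * k) ≤ b k := by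
    have e : ∑ j ∈ Finset.range k, c (k + j) = b (k + 0) - b (k + k) := by
      rw [← Finset.sum_range_sub' (fun j => b (k + j)) k]
      refine Finset.sum_congr rfl fun j _ => ?_
      simp only [b, c, ← add_assoc]
      ring
    have : (Finset.range k).card • c (2 * k) ≤ ∑ j ∈ Finset.range k, c (k + j) :=
      Finset.card_nsmul_le_sum _ _ _ fun j hj => hc (by have := Finset.mem_range.1 hj; omega)
    rw [Finset.card_range, nsmul_eq_mul] at this
    have h3 : 0 ≤ b (k + k) := sub_nonneg.2 (u1 _)
    rw [add_zero] at e
    linarith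
  have h3 := mul_le_mul_of_nonneg_left h2 (Nat.cast_nonneg (α := ℝ) k)
  calc (k : ℝ) ^ 2 * c (2 * k) = k * (k * c (2 * k)) := by ring
    _ ≤ _ := h3.trans h1

lemma mulVec_pow_succ (k : ℕ) (f : Ω → ℝ) : P ^ (k + 1) *ᵥ f = P *ᵥ (P ^ k *ᵥ f) := by
  rw [pow_succ', Matrix.mulVec_mulVec]

lemma nrm_diff (h : IsStochastic P) (hp : IsProbVec pi) (hpi : pi ᵥ* P = pi)
    (hr : IsReversible P pi) (f : Ω → ℝ) (k m : ℕ) (hm : 2 * k ≤ m) :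
    (k : ℝ) ^ 2 * nrm pi (P ^ m *ᵥ f - P ^ (m + 2) *ᵥ f) ≤ nrm pi f := by
  have e : ∀ j, nrm pi (P ^ j *ᵥ f - P ^ (j + 2) *ᵥ f) = nrm pi (P ^ j *ᵥ f)
      - 2 * nrm pi (P ^ (j + 1) *ᵥ f) + nrm pi (P ^ (j + 2) *ᵥ f) := by
    intro j
    have := nrm_second hr (P ^ j *ᵥ f)
    rw [← mulVec_pow_succ, ← mulVec_pow_succ] at this
    exact this
  have hanti : Antitone fun j => nrm pi (P ^ j *ᵥ f - P ^ (j + 2) *ᵥ f) := by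
    refine antitone_nat_of_succ_le fun j => ?_
    have := nrm_contract h hp hpi (P ^ j *ᵥ f - P ^ (j + 2) *ᵥ f)
    rw [Matrix.mulVec_sub, ← mulVec_pow_succ, ← mulVec_pow_succ] at this
    exact this
  have h1 := seq_bound (u := fun j => nrm pi (P ^ j *ᵥ f)) (fun j => nrm_nonneg hp _)
    (fun j => by
      have := nrm_contract h hp hpi (P ^ j *ᵥ f)
      rw [← mulVec_pow_succ] at this
      exact this)
    (fun j => by rw [← e]; exact nrm_nonneg hp _)
    (fun j => by rw [← e j, ← e (j + 1)]; exact hanti (Nat.le_succ j)) k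
  rw [← e (2 * k)] at h1
  simp only [pow_zero, Matrix.one_mulVec] at h1
  refine le_trans ?_ h1
  exact mul_le_mul_of_nonneg_left (hanti hm) (sq_nonneg _)

lemma l1_le (hp : IsProbVec pi) {g : Ω → ℝ} {a : ℝ} (ha : 0 < a) (hg : nrm pi g ≤ a ^ 2) :
    ∑ x, pi x * |g x| ≤ a := by
  have h1 : ∑ x, pi x * |g x| ≤ ∑ x, (pi x * g x ^ 2 * (1 / (2 * a)) + pi x * (a / 2)) := by
    refine Finset.sum_le_sum fun x _ => ?_
    rw [mul_assoc, ← mul_add]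
    refine mul_le_mul_of_nonneg_left ?_ (hp.1 x)
    rw [← sq_abs (g x)]
    have e : |g x| ^ 2 * (1 / (2 * a)) + a / 2 - |g x| = (|g x| - a) ^ 2 / (2 * a) := by
      field_simp; ring
    have : 0 ≤ (|g x| - a) ^ 2 / (2 * a) := by positivity
    linarith
  rw [Finset.sum_add_distrib, ← Finset.sum_mul, ← Finset.sum_mul, hp.2] at h1
  refine h1.trans ?_
  change nrm pi g * (1 / (2 * a)) + 1 * (a / 2) ≤ a
  have : nrm pi g * (1 / (2 * a)) ≤ a ^ 2 * (1 / (2 * a)) :=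
    mul_le_mul_of_nonneg_right hg (by positivity)
  have e : a ^ 2 * (1 / (2 * a)) = a / 2 := by field_simp
  linarith

/-- Averaged operator. -/
noncomputable def aO (P : Matrix Ω Ω ℝ) (m : ℕ) (f : Ω → ℝ) (y : Ω) : ℝ :=
  ((P ^ m *ᵥ f) y + (P ^ (m + 1) *ᵥ f) y) / 2

lemma aO_eq (m : ℕ) (f : Ω → ℝ) (x : Ω) : aO P m f x = ∑ y, aK P m x y * f y := by
  unfold aO aK
  simp only [Matrix.mulVec, dotProduct]
  rw [← Finset.sum_add_distrib, Finset.sum_div]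
  exact Finset.sum_congr rfl fun y _ => by ring

lemma aO_add (k m : ℕ) (f : Ω → ℝ) (x : Ω) : aO P (k + m) f x = (P ^ k *ᵥ aO P m f) x := by
  have e : aO P m f = (2 : ℝ)⁻¹ • (P ^ m *ᵥ f + P ^ (m + 1) *ᵥ f) := by
    funext y; simp only [aO, Pi.smul_apply, Pi.add_apply, smul_eq_mul]; ring
  rw [e, Matrix.mulVec_smul, Matrix.mulVec_add, Matrix.mulVec_mulVec, Matrix.mulVec_mulVec,
    ← pow_add, ← pow_add]
  simp only [aO, Pi.smul_apply, Pi.add_apply, smul_eq_mul, add_assoc]; ring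

lemma aO_mem (h : IsStochastic P) {f : Ω → ℝ} (h0 : ∀ y, 0 ≤ f y) (h1 : ∀ y, f y ≤ 1) (m : ℕ)
    (x : Ω) : 0 ≤ aO P m f x ∧ aO P m f x ≤ 1 := by
  have hp := aK_prob h m x
  rw [aO_eq]
  refine ⟨Finset.sum_nonneg fun y _ => mul_nonneg (hp.1 y) (h0 y), ?_⟩
  rw [← hp.2]
  exact Finset.sum_le_sum fun y _ => mul_le_of_le_one_right (hp.1 y) (h1 y)

lemma aO_stat (hpi : pi ᵥ* P = pi) (m : ℕ) (f : Ω → ℝ) :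
    ∑ x, pi x * aO P m f x = ∑ x, pi x * f x := by
  have h1 := stat_sum (stat_pow hpi m) f
  have h2 := stat_sum (stat_pow hpi (m + 1)) f
  have e : ∑ x, pi x * aO P m f x
      = (∑ x, pi x * (P ^ m *ᵥ f) x + ∑ x, pi x * (P ^ (m + 1) *ᵥ f) x) / 2 := by
    rw [← Finset.sum_add_distrib, Finset.sum_div]
    exact Finset.sum_congr rfl fun y _ => by unfold aO; ring
  rw [e, h1, h2]; ring

lemma aO_diff_l1 (h : IsStochastic P) (hp : IsProbVec pi) (hpi : pi ᵥ* P = pi)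
    (hr : IsReversible P pi) {f : Ω → ℝ} (h0 : ∀ y, 0 ≤ f y) (h1 : ∀ y, f y ≤ 1) {K m : ℕ}
    (hK : 0 < K) (hm : 2 * K ≤ m) :
    ∑ x, pi x * |aO P m f x - aO P (m + 1) f x| ≤ 1 / (2 * K) := by
  have hK' : (0 : ℝ) < K := by exact_mod_cast hK
  have hf : nrm pi f ≤ 1 := by
    rw [← hp.2]
    exact Finset.sum_le_sum fun y _ => mul_le_of_le_one_right (hp.1 y)
      (pow_le_one₀ (h0 y) (h1 y))
  have h2 := (nrm_diff h hp hpi hr f K m hm).trans hf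
  have h3 : nrm pi (P ^ m *ᵥ f - P ^ (m + 2) *ᵥ f) ≤ (1 / (K : ℝ)) ^ 2 := by
    rw [div_pow, one_pow, le_div_iff₀ (by positivity)]; linarith
  have h4 := l1_le hp (by positivity) h3
  have e : ∑ x, pi x * |aO P m f x - aO P (m + 1) f x|
      = (∑ x, pi x * |(P ^ m *ᵥ f - P ^ (m + 2) *ᵥ f) x|) / 2 := by
    rw [Finset.sum_div]
    refine Finset.sum_congr rfl fun y _ => ?_
    have : aO P m f y - aO P (m + 1) f y = (P ^ m *ᵥ f - P ^ (m + 2) *ᵥ f) y / 2 := by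
      simp only [aO, Pi.sub_apply, add_assoc]; norm_num; ring
    rw [this, abs_div, abs_two]; ring
  rw [e]
  have e2 : 1 / (2 * (K : ℝ)) = 1 / K / 2 := by field_simp
  rw [e2]; linarith

lemma ave_le_cont (h : IsStochastic P) (hp : IsProbVec pi) (hpi : pi ᵥ* P = pi)
    (hr : IsReversible P pi) (x : Ω) {t : ℝ} (ht : 0 ≤ t) {J K : ℕ} (hJ : 0 < J) (hK0 : 0 < K) :
    tvDist (aK P (⌊t⌋₊ + (2 * K + J)) x) pi ≤ tvDist (hK P t x) pi + t / J ^ 2 + J / K := by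
  classical
  have hJ' : (0 : ℝ) < J := by exact_mod_cast hJ
  have hK' : (0 : ℝ) < K := by exact_mod_cast hK0
  set k0 := ⌊t⌋₊ with hk0
  set r0 := 2 * K + J with hr0
  set s := k0 + r0 with hs
  have hprob := hK_prob h ht x
  rw [tv_eq (aK_prob h s x) hp, tv_eq hprob hp]
  let f : Ω → ℝ := fun y => if aK P s x y ≤ pi y then 1 else 0
  have f0 : ∀ y, 0 ≤ f y := fun y => by simp only [f]; split_ifs <;> norm_num
  have f1 : ∀ y, f y ≤ 1 := fun y => by simp only [f]; split_ifs <;> norm_num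
  have hmin : ∑ y, min (aK P s x y) (pi y) = aO P s f x + (1 - ∑ y, pi y * f y) := by
    rw [aO_eq, ← hp.2, ← Finset.sum_sub_distrib, ← Finset.sum_add_distrib]
    refine Finset.sum_congr rfl fun y _ => ?_
    simp only [f]
    split_ifs with hy
    · rw [min_eq_left hy]; ring
    · rw [min_eq_right (not_le.1 hy).le]; ring
  rw [hmin]
  let D : Ω → ℝ := fun y => ∑ i ∈ Finset.Ico (2 * K) (2 * K + 2 * J),
    |aO P i f y - aO P (i + 1) f y|
  have hD0 : ∀ y, 0 ≤ D y := fun y => Finset.sum_nonneg fun i _ => abs_nonneg _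
  have hDsum : ∑ y, pi y * D y ≤ J / K := by
    simp only [D, Finset.mul_sum]
    rw [Finset.sum_comm]
    refine (Finset.sum_le_card_nsmul _ _ (1 / (2 * (K : ℝ))) fun i hi => ?_).trans_eq ?_
    · exact aO_diff_l1 h hp hpi hr f0 f1 hK0 (Finset.mem_Ico.1 hi).1
    · rw [Nat.card_Ico, nsmul_eq_mul, Nat.add_sub_cancel_left]; push_cast; field_simp
  have hDd : ∀ m l y, 2 * K ≤ m → m ≤ l → l ≤ 2 * K + 2 * J →
      |aO P m f y - aO P l f y| ≤ D y := by
    intro m l y hm hml hl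
    have h1 := dist_le_Ico_sum_dist (fun i => aO P i f y) hml
    simp only [Real.dist_eq] at h1
    refine h1.trans ?_
    exact Finset.sum_le_sum_of_subset_of_nonneg (Finset.Ico_subset_Ico hm hl)
      fun i _ _ => abs_nonneg _
  let g : Ω → ℝ := fun y => max 0 (aO P r0 f y - D y)
  have g0 : ∀ y, 0 ≤ g y := fun y => le_max_left _ _
  have g1 : ∀ y, g y ≤ 1 := fun y => max_le (by norm_num) (by
    linarith [hD0 y, (aO_mem h f0 f1 r0 y).2])
  let I : ℕ → ℝ := fun k => if k ≤ k0 + J ∧ k0 ≤ k + J then 0 else 1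
  have hkb : ∀ k, (P ^ k *ᵥ g) x ≤ aO P s f x + I k := by
    intro k
    simp only [I]
    split_ifs with hk
    · obtain ⟨m, hm⟩ : ∃ m, s = k + m := ⟨s - k, by omega⟩
      rw [add_zero, hm, aO_add]
      refine mulVec_mono (pow_stoch h k) (fun y => ?_) x
      refine max_le (aO_mem h f0 f1 m y).1 ?_
      rcases le_total m r0 with hmr | hmr
      · have := hDd m r0 y (by omega) hmr (by omega)
        rw [abs_le] at this
        linarith
      · have := hDd r0 m y (by omega) hmr (by omega)
        rw [abs_le] at this
        linarith
    · have h1 := mulVec_mono (pow_stoch h k) g1 x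
      rw [mulVec_const (pow_stoch h k)] at h1
      linarith [(aO_mem h f0 f1 s x).1]
  have hI : ∑' k, pw t k * I k ≤ t / J ^ 2 := by
    refine pw_cheb ht hJ' (fun k => ?_) (fun k => ?_) (fun k hk => ?_)
    · simp only [I]; split_ifs <;> norm_num
    · simp only [I]; split_ifs <;> norm_num
    · simp only [I]
      rw [if_pos]
      rw [abs_lt] at hk
      have a1 := Nat.floor_le ht
      have a2 := Nat.lt_floor_add_one t
      rw [← hk0] at a1 a2
      constructor
      · have : (k : ℝ) < ((k0 + J + 1 : ℕ) : ℝ) := by push_cast; linarith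
        have := Nat.cast_lt.1 this
        omega
      · have : (k0 : ℝ) < ((k + J : ℕ) : ℝ) := by push_cast; linarith
        exact (Nat.cast_lt.1 this).le
  have hIs : Summable (fun k => pw t k * I k) := pw_summable ht (M := 1) (fun k => by
    simp only [I]; split_ifs <;> norm_num)
  have hHg : HasSum (fun k => pw t k * (P ^ k *ᵥ g) x) (∑ y, hK P t x y * g y) := by
    have h1 := hasSum_sum (s := Finset.univ) (fun y _ => (hK_hasSum h ht x y).mul_right (g y))
    have e : (fun k => pw t k * (P ^ k *ᵥ g) x) = fun k => ∑ y, pw t k * (P ^ k) x y * g y := by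
      funext k
      simp only [Matrix.mulVec, dotProduct, Finset.mul_sum, mul_assoc]
    rw [e]; exact h1
  have hup : ∑ y, hK P t x y * g y ≤ aO P s f x + t / J ^ 2 := by
    have h1 := ((pw_hasSum t).mul_right (aO P s f x)).add hIs.hasSum
    have := hasSum_le (fun k => ?_) hHg h1
    · linarith
    · rw [← mul_add]
      exact mul_le_mul_of_nonneg_left (hkb k) (pw_nonneg ht k)
  have hlow : ∑ y, (min (hK P t x y) (pi y) - pi y * (1 - aO P r0 f y) - pi y * D y)
      ≤ ∑ y, hK P t x y * g y := by
    refine Finset.sum_le_sum fun y _ => ?_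
    set v := min (hK P t x y) (pi y) with hv
    have v0 : 0 ≤ v := le_min (hprob.1 y) (hp.1 y)
    have v1 : v ≤ hK P t x y := min_le_left _ _
    have v2 : v ≤ pi y := min_le_right _ _
    have b1 : v * g y ≤ hK P t x y * g y := mul_le_mul_of_nonneg_right v1 (g0 y)
    have b2 : v * (aO P r0 f y - D y) ≤ v * g y := mul_le_mul_of_nonneg_left (le_max_right _ _) v0
    have b3 : v * (1 - aO P r0 f y) ≤ pi y * (1 - aO P r0 f y) :=
      mul_le_mul_of_nonneg_right v2 (by linarith [(aO_mem h f0 f1 r0 y).2])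
    have b4 : v * D y ≤ pi y * D y := mul_le_mul_of_nonneg_right v2 (hD0 y)
    nlinarith
  rw [Finset.sum_sub_distrib, Finset.sum_sub_distrib] at hlow
  have e : ∑ y, pi y * (1 - aO P r0 f y) = 1 - ∑ y, pi y * f y := by
    simp only [mul_sub, mul_one, Finset.sum_sub_distrib, hp.2, aO_stat hpi r0 f]
  rw [e] at hlow
  linarith

lemma pi_pos (h : IsRevMC P pi) (y : Ω) : 0 < pi y := by
  obtain ⟨⟨hs, hirr, hp, hpi⟩, hr⟩ := h
  obtain ⟨x, hx⟩ : ∃ x, 0 < pi x := by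
    by_contra hcon
    push Not at hcon
    have : ∑ x, pi x ≤ 0 := Finset.sum_nonpos fun x _ => hcon x
    linarith [hp.2]
  obtain ⟨n, hn⟩ := hirr x y
  have e := congrFun (stat_pow hpi n) y
  rw [← e]
  simp only [Matrix.vecMul, dotProduct]
  refine lt_of_lt_of_le (mul_pos hx hn) ?_
  exact Finset.single_le_sum (f := fun z => pi z * (P ^ n) z y)
    (fun z _ => mul_nonneg (hp.1 z) ((pow_stoch hs n).1 z y)) (Finset.mem_univ x)

lemma harmonic_const (hs : IsStochastic P) (hirr : IsIrreducibleMatrix P) [Nonempty Ω]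
    {f : Ω → ℝ} (hf : P *ᵥ f = f) : ∃ c, ∀ z, f z = c := by
  obtain ⟨x0, hx0⟩ := Finite.exists_max f
  refine ⟨f x0, fun z => ?_⟩
  have hfn : ∀ n, P ^ n *ᵥ f = f := by
    intro n
    induction n with
    | zero => simp
    | succ n ih => rw [mulVec_pow_succ, ih, hf]
  obtain ⟨n, hn⟩ := hirr x0 z
  have h1 : ∑ w, (P ^ n) x0 w * (f x0 - f w) = 0 := by
    have e := congrFun (hfn n) x0
    simp only [Matrix.mulVec, dotProduct] at e
    simp only [mul_sub, Finset.sum_sub_distrib, ← Finset.sum_mul, (pow_stoch hs n).2, e]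
    ring
  have h2 := (Finset.sum_eq_zero_iff_of_nonneg (fun w _ =>
    mul_nonneg ((pow_stoch hs n).1 x0 w) (sub_nonneg.2 (hx0 w)))).1 h1 z (Finset.mem_univ z)
  rcases mul_eq_zero.1 h2 with h3 | h3
  · exact absurd h3 hn.ne'
  · linarith

lemma exists_ave_small [Nonempty Ω] (h : IsRevMC P pi) {ε : ℝ} (hε : 0 < ε) :
    ∃ s : ℕ, ∀ x, tvDist (aK P s x) pi ≤ ε := by
  have hpos := pi_pos h
  obtain ⟨⟨hs, hirr, hp, hpi⟩, hr⟩ := h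
  have hmem : ∀ m, aK P m ∈ Set.Icc (0 : Ω → Ω → ℝ) 1 := by
    intro m
    refine ⟨fun x y => (aK_prob hs m x).1 y, fun x y => ?_⟩
    have hq := aK_prob hs m x
    change aK P m x y ≤ 1
    rw [← hq.2]
    exact Finset.single_le_sum (f := fun y => aK P m x y) (fun z _ => hq.1 z) (Finset.mem_univ y)
  obtain ⟨G, -, φ, hφ, hlim⟩ := (isCompact_Icc (a := (0 : Ω → Ω → ℝ)) (b := 1)).tendsto_subseq hmem
  have hlim2 : ∀ x y, Tendsto (fun m => aK P (φ m) x y) atTop (nhds (G x y)) := by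
    intro x y
    have h1 := tendsto_pi_nhds.1 hlim x
    exact tendsto_pi_nhds.1 h1 y
  have hharm : ∀ y, P *ᵥ (fun z => G z y) = fun z => G z y := by
    intro y
    funext x
    let f : Ω → ℝ := fun z => if z = y then 1 else 0
    have f0 : ∀ y, 0 ≤ f y := fun y => by simp only [f]; split_ifs <;> norm_num
    have f1 : ∀ y, f y ≤ 1 := fun y => by simp only [f]; split_ifs <;> norm_num
    have ef : ∀ m z, aO P m f z = aK P m z y := by
      intro m z
      rw [aO_eq]
      simp [f]
    have ef2 : ∀ m, aO P (m + 1) f x = (P *ᵥ fun z => aK P m z y) x := by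
      intro m
      rw [add_comm, aO_add, pow_one]
      have e3 : aO P m f = fun z => aK P m z y := funext fun z => ef m z
      rw [e3]
    have hl : Tendsto (fun m => pi x * |aO P (φ m) f x - aO P (φ m + 1) f x|) atTop
        (nhds (pi x * |G x y - (P *ᵥ fun z => G z y) x|)) := by
      simp only [ef2, ef]
      refine Tendsto.const_mul _ (Tendsto.abs ((hlim2 x y).sub ?_))
      simp only [Matrix.mulVec, dotProduct]
      exact tendsto_finsetSum _ fun z _ => (hlim2 z y).const_mul _
    have hz : pi x * |G x y - (P *ᵥ fun z => G z y) x| ≤ 0 := by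
      have hb : ∀ K : ℕ, pi x * |G x y - (P *ᵥ fun z => G z y) x| ≤ 1 / (2 * ((K + 1 : ℕ) : ℝ)) := by
        intro K
        refine le_of_tendsto hl ?_
        filter_upwards [eventually_ge_atTop (2 * (K + 1))] with m hm
        have h1 := aO_diff_l1 hs hp hpi hr f0 f1 (Nat.succ_pos K) (hm.trans (hφ.id_le m))
        refine le_trans ?_ h1
        exact Finset.single_le_sum
          (f := fun x => pi x * |aO P (φ m) f x - aO P (φ m + 1) f x|)
          (fun z _ => mul_nonneg (hp.1 z) (abs_nonneg _)) (Finset.mem_univ x)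
      refine ge_of_tendsto (x := atTop) (f := fun K : ℕ => 1 / (2 * ((K + 1 : ℕ) : ℝ))) ?_
        (Eventually.of_forall hb)
      have := (tendsto_one_div_add_atTop_nhds_zero_nat (𝕜 := ℝ)).const_mul (1 / 2)
      rw [mul_zero] at this
      refine this.congr fun K => ?_
      push_cast
      field_simp
    have h3 : |G x y - (P *ᵥ fun z => G z y) x| ≤ 0 := by
      by_contra hcon
      push Not at hcon
      linarith [mul_pos (hpos x) hcon]
    have h4 := abs_eq_zero.1 (le_antisymm h3 (abs_nonneg _))
    linarith
  have hG : ∀ x y, G x y = pi y := by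
    intro x y
    obtain ⟨c, hc⟩ := harmonic_const hs hirr (hharm y)
    have h1 : ∀ m, ∑ z, pi z * aK P m z y = pi y := by
      intro m
      have e1 := congrFun (stat_pow hpi m) y
      have e2 := congrFun (stat_pow hpi (m + 1)) y
      simp only [Matrix.vecMul, dotProduct] at e1 e2
      have e : ∑ z, pi z * aK P m z y
          = (∑ z, pi z * (P ^ m) z y + ∑ z, pi z * (P ^ (m + 1)) z y) / 2 := by
        rw [← Finset.sum_add_distrib, Finset.sum_div]
        exact Finset.sum_congr rfl fun z _ => by unfold aK; ring
      rw [e, e1, e2]; ring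
    have h2 : Tendsto (fun m => ∑ z, pi z * aK P (φ m) z y) atTop (nhds (∑ z, pi z * G z y)) :=
      tendsto_finsetSum _ fun z _ => (hlim2 z y).const_mul _
    simp only [h1, hc, ← Finset.sum_mul, hp.2, one_mul] at h2
    rw [hc x]
    exact (tendsto_nhds_unique h2 tendsto_const_nhds)
  have hev : ∀ x, ∀ᶠ m in atTop, tvDist (aK P (φ m) x) pi ≤ ε := by
    intro x
    have h1 : Tendsto (fun m => tvDist (aK P (φ m) x) pi) atTop (nhds ((∑ y : Ω, (0 : ℝ)) / 2)) := by
      unfold tvDist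
      refine Tendsto.div_const (tendsto_finsetSum _ fun y _ => ?_) 2
      have h2 := ((hlim2 x y).sub_const (pi y)).abs
      rw [hG, sub_self, abs_zero] at h2
      exact h2
    rw [Finset.sum_const_zero, zero_div] at h1
    exact (h1.eventually_lt_const hε).mono fun m hm => hm.le
  obtain ⟨m, hm⟩ := (eventually_all.2 hev).exists
  exact ⟨φ m, hm⟩

lemma contMax_le_iff [Nonempty Ω] {t ε : ℝ} :
    contDistMax P pi t ≤ ε ↔ ∀ x, tvDist (hK P t x) pi ≤ ε := by
  unfold contDistMax
  rw [ciSup_le_iff (Set.finite_range _).bddAbove]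
  simp only [contDist_eq]

lemma aveMax_le_iff [Nonempty Ω] {k : ℕ} {ε : ℝ} :
    aveDistMax P pi (k : ℝ) ≤ ε ↔ ∀ x, tvDist (aK P k x) pi ≤ ε := by
  unfold aveDistMax
  rw [ciSup_le_iff (Set.finite_range _).bddAbove]
  simp only [aveDist_eq]

lemma aveMix_spec [Nonempty Ω] (h : IsRevMC P pi) {ε : ℝ} (hε : 0 < ε) (x : Ω) :
    tvDist (aK P (aveMix P pi ε) x) pi ≤ ε := by
  have hne : {t : ℕ | aveDistMax P pi t ≤ ε}.Nonempty := by
    obtain ⟨s, hs⟩ := exists_ave_small h hε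
    exact ⟨s, aveMax_le_iff.2 hs⟩
  exact aveMax_le_iff.1 (Nat.sInf_mem hne) x

lemma aveMix_le [Nonempty Ω] {ε : ℝ} {s : ℕ} (hs : ∀ x, tvDist (aK P s x) pi ≤ ε) :
    aveMix P pi ε ≤ s := Nat.sInf_le (aveMax_le_iff.2 hs)

lemma aveMix_anti [Nonempty Ω] (h : IsRevMC P pi) {ε η : ℝ} (hε : 0 < ε) (hη : ε ≤ η) :
    aveMix P pi η ≤ aveMix P pi ε :=
  aveMix_le fun x => (aveMix_spec h hε x).trans hη

lemma contMix_bdd (ε : ℝ) : BddBelow {t : ℝ | 0 ≤ t ∧ contDistMax P pi t ≤ ε} :=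
  ⟨0, fun _ ht => ht.1⟩

lemma cont_mem [Nonempty Ω] (h : IsRevMC P pi) {ε δ : ℝ} (hε : 0 < ε) (hδ : 0 < δ) (hδ1 : δ ≤ 1) :
    (aveMix P pi ε : ℝ) + 4 / δ ^ 2 * (√(aveMix P pi ε : ℝ) + 1) ∈
      {t : ℝ | 0 ≤ t ∧ contDistMax P pi t ≤ ε + δ} := by
  set s := aveMix P pi ε with hs
  set q := √(s : ℝ) with hq
  set C := 4 / δ ^ 2 with hC
  have hq0 : 0 ≤ q := Real.sqrt_nonneg _
  have hC0 : 0 < C := by positivity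
  have hs0 : (0 : ℝ) ≤ s := Nat.cast_nonneg s
  have hqs : q ^ 2 = s := Real.sq_sqrt hs0
  refine ⟨by positivity, contMax_le_iff.2 fun x => ?_⟩
  have hlt : (s : ℝ) < s + C * (q + 1) := by
    have : 0 < C * (q + 1) := by positivity
    linarith
  refine (cont_le_ave h.1.1 h.1.2.2.1 h.1.2.2.2 x s hlt).trans ?_
  have h1 := aveMix_spec h hε x
  rw [← hs] at h1
  set t := (s : ℝ) + C * (q + 1) with ht
  have ht2 : t - s = C * (q + 1) := by rw [ht]; ring
  have hCδ : C * δ ^ 2 = 4 := by rw [hC]; field_simp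
  have hC4 : 4 ≤ C := by
    rw [hC, le_div_iff₀ (by positivity)]; nlinarith
  have h2 : t / (t - s) ^ 2 ≤ δ / 2 := by
    rw [ht2, div_le_iff₀ (by positivity), ht, ← hqs]
    have e : δ / 2 * (C * (q + 1)) ^ 2 ≥ 2 * C * (q + 1) ^ 2 := by
      have : δ / 2 * (C * (q + 1)) ^ 2 ≥ δ ^ 2 / 2 * (C * (q + 1)) ^ 2 := by
        refine mul_le_mul_of_nonneg_right ?_ (sq_nonneg _)
        nlinarith
      have e2 : δ ^ 2 / 2 * (C * (q + 1)) ^ 2 = (C * δ ^ 2) * C * (q + 1) ^ 2 / 2 := by ring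
      rw [e2, hCδ] at this
      linarith
    nlinarith [mul_nonneg hC0.le hq0, mul_nonneg hC0.le (sq_nonneg q)]
  have h3 : 1 / √t ≤ δ / 2 := by
    have hct : C ≤ t := by
      rw [ht]; nlinarith [mul_nonneg hC0.le hq0]
    have : 2 / δ ≤ √t := by
      refine Real.le_sqrt_of_sq_le (le_trans (le_of_eq ?_) hct)
      rw [hC]; ring
    rw [div_le_div_iff₀ (by linarith [show 0 < 2 / δ by positivity]) (by norm_num)]
    rw [div_le_iff₀ hδ] at this
    linarith
  linarith

lemma contMix_le [Nonempty Ω] (h : IsRevMC P pi) {ε δ : ℝ} (hε : 0 < ε) (hδ : 0 < δ)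
    (hδ1 : δ ≤ 1) :
    contMix P pi (ε + δ) ≤ (aveMix P pi ε : ℝ) + 4 / δ ^ 2 * (√(aveMix P pi ε : ℝ) + 1) :=
  csInf_le (contMix_bdd _) (cont_mem h hε hδ hδ1)

lemma cont_nonempty [Nonempty Ω] (h : IsRevMC P pi) {ε : ℝ} (hε : 0 < ε) :
    {t : ℝ | 0 ≤ t ∧ contDistMax P pi t ≤ ε}.Nonempty := by
  have hm : 0 < min ε 1 := lt_min hε one_pos
  have h1 := cont_mem h (ε := min ε 1 / 2) (δ := min ε 1 / 2) (by linarith) (by linarith)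
    (by linarith [min_le_right ε 1])
  rw [add_halves] at h1
  exact ⟨_, h1.1, h1.2.trans (min_le_left _ _)⟩

lemma contMix_anti [Nonempty Ω] (h : IsRevMC P pi) {ε η : ℝ} (hε : 0 < ε) (hη : ε ≤ η) :
    contMix P pi η ≤ contMix P pi ε :=
  csInf_le_csInf (contMix_bdd _) (cont_nonempty h hε) fun _ ht => ⟨ht.1, ht.2.trans hη⟩

lemma contMix_nonneg (ε : ℝ) : 0 ≤ contMix P pi ε := Real.sInf_nonneg fun _ ht => ht.1

/-- The constant in the lower bound. -/
noncomputable def cLow (δ : ℝ) : ℝ := (2 * (⌈2 / δ⌉₊ : ℝ) + 1) * (4 / δ)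

lemma le_contMix [Nonempty Ω] (h : IsRevMC P pi) {ε δ : ℝ} (hε : 0 < ε) (hδ : 0 < δ)
    (hδ1 : δ ≤ 1) :
    (aveMix P pi (ε + δ) : ℝ) - cLow δ * (√(aveMix P pi (ε + δ) : ℝ) + 1) ≤ contMix P pi ε := by
  set L := ⌈2 / δ⌉₊ with hL
  have hL1 : 2 / δ ≤ (L : ℝ) := Nat.le_ceil _
  have h2δ : 2 ≤ 2 / δ := by rw [le_div_iff₀ hδ]; linarith
  have hC0 : 0 < cLow δ := by unfold cLow; positivity
  refine le_csInf (cont_nonempty h hε) ?_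
  rintro t ⟨ht0, ht⟩
  rw [contMax_le_iff] at ht
  set T := aveMix P pi (ε + δ) with hT
  have key : (T : ℝ) ≤ t + cLow δ * (√t + 1) := by
    have hq0 : 0 ≤ √t := Real.sqrt_nonneg t
    have hqs : √t ^ 2 = t := Real.sq_sqrt ht0
    set J := ⌈2 / δ * (√t + 1)⌉₊ with hJ
    have hJ1 : 2 / δ * (√t + 1) ≤ (J : ℝ) := Nat.le_ceil _
    have hpos : 0 < 2 / δ * (√t + 1) := by positivity
    have hJ2 : (J : ℝ) < 2 / δ * (√t + 1) + 1 := Nat.ceil_lt_add_one hpos.le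
    have hJ0 : 0 < J := by
      have : (0 : ℝ) < J := by linarith
      exact_mod_cast this
    have hJ0' : (0 : ℝ) < J := by exact_mod_cast hJ0
    have hL0' : (0 : ℝ) < L := by linarith
    have hL0 : 0 < L := by exact_mod_cast hL0'
    have hle : T ≤ ⌊t⌋₊ + (2 * (J * L) + J) := by
      refine aveMix_le fun x => ?_
      refine (ave_le_cont h.1.1 h.1.2.2.1 h.1.2.2.2 h.2 x ht0 hJ0 (Nat.mul_pos hJ0 hL0)).trans ?_
      have e1 : t / (J : ℝ) ^ 2 ≤ δ / 2 := by
        rw [div_le_iff₀ (by positivity)]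
        have a1 : (2 / δ * (√t + 1)) ^ 2 ≤ (J : ℝ) ^ 2 := pow_le_pow_left₀ hpos.le hJ1 2
        have a2 : δ / 2 * (2 / δ * (√t + 1)) ^ 2 ≤ δ / 2 * (J : ℝ) ^ 2 :=
          mul_le_mul_of_nonneg_left a1 (by positivity)
        have a3 : δ / 2 * (2 / δ * (√t + 1)) ^ 2 = 2 / δ * (√t + 1) ^ 2 := by field_simp
        have a4 : 1 * (√t + 1) ^ 2 ≤ 2 / δ * (√t + 1) ^ 2 :=
          mul_le_mul_of_nonneg_right (by linarith) (sq_nonneg _)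
        nlinarith
      have e2 : (J : ℝ) / ((J * L : ℕ) : ℝ) ≤ δ / 2 := by
        push_cast
        rw [div_mul_cancel_left₀ hJ0'.ne', inv_le_comm₀ hL0' (by positivity)]
        simpa using hL1
      linarith [ht x]
    have hle2 : (T : ℝ) ≤ (⌊t⌋₊ : ℝ) + (2 * (J * L) + J) := by exact_mod_cast hle
    have hfl := Nat.floor_le ht0
    have hJ3 : (J : ℝ) ≤ 4 / δ * (√t + 1) := by
      have e : 4 / δ * (√t + 1) = 2 / δ * (√t + 1) + 2 / δ * (√t + 1) := by ring
      have : 1 ≤ 2 / δ * (√t + 1) := by nlinarith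
      linarith
    have : (2 * (L : ℝ) + 1) * J ≤ (2 * (L : ℝ) + 1) * (4 / δ * (√t + 1)) :=
      mul_le_mul_of_nonneg_left hJ3 (by positivity)
    unfold cLow
    rw [← hL]
    nlinarith
  rcases le_total (T : ℝ) t with hTt | hTt
  · have : 0 ≤ cLow δ * (√(T : ℝ) + 1) := by positivity
    linarith
  · have : cLow δ * (√t + 1) ≤ cLow δ * (√(T : ℝ) + 1) :=
      mul_le_mul_of_nonneg_left (by linarith [Real.sqrt_le_sqrt hTt]) hC0.le
    linarith

lemma contMix_triv [Nonempty Ω] (h : IsRevMC P pi) (h0 : contMix P pi (1 / 4) = 0) {ε : ℝ}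
    (hε : 0 < ε) : contMix P pi ε = 0 := by
  have hp := h.1.2.2.1
  have hs := h.1.1
  rcases subsingleton_or_nontrivial Ω with hsub | hnt
  · refine le_antisymm (csInf_le (contMix_bdd _) ⟨le_rfl, contMax_le_iff.2 fun x => ?_⟩)
      (contMix_nonneg _)
    have h1 := hK_prob hs (le_refl (0 : ℝ)) x
    have hu : (Finset.univ : Finset Ω) = {x} := by
      ext y; simp [Subsingleton.elim y x]
    have h2 := h1.2
    have h3 := hp.2
    unfold tvDist
    rw [hu, Finset.sum_singleton] at h2 h3 ⊢
    rw [h2, h3]; simpa using hε.le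
  · exfalso
    obtain ⟨x, hx⟩ : ∃ x, pi x ≤ 1 / 2 := by
      by_contra hcon
      push Not at hcon
      obtain ⟨a, b, hab⟩ := exists_pair_ne Ω
      have h1 : ∑ z ∈ ({a, b} : Finset Ω), pi z ≤ ∑ z, pi z :=
        Finset.sum_le_sum_of_subset_of_nonneg (Finset.subset_univ _) fun z _ _ => hp.1 z
      rw [Finset.sum_pair hab, hp.2] at h1
      linarith [hcon a, hcon b]
    have : (1 / 4 : ℝ) ≤ contMix P pi (1 / 4) := by
      refine le_csInf (cont_nonempty h (by norm_num)) ?_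
      rintro t ⟨ht0, ht⟩
      have h1 := contMax_le_iff.1 ht x
      have hpr := hK_prob hs ht0 x
      rw [tv_eq hpr hp] at h1
      have h2 : ∑ y, min (hK P t x y) (pi y) ≤ pi x + (1 - hK P t x x) := by
        rw [← Finset.add_sum_erase _ _ (Finset.mem_univ x), ← hpr.2,
          ← Finset.add_sum_erase (Finset.univ) (hK P t x) (Finset.mem_univ x)]
        have h3 : ∑ y ∈ Finset.univ.erase x, min (hK P t x y) (pi y)
            ≤ ∑ y ∈ Finset.univ.erase x, hK P t x y :=
          Finset.sum_le_sum fun y _ => min_le_left _ _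
        linarith [min_le_right (hK P t x x) (pi x)]
      have h3 : Real.exp (-t) ≤ hK P t x x := by
        have := le_hasSum (hK_hasSum hs ht0 x x) 0
          (fun k _ => mul_nonneg (pw_nonneg ht0 k) ((pow_stoch hs k).1 x x))
        simpa [pw] using this
      linarith [Real.add_one_le_exp (-t)]
    linarith

lemma aveMix_double [Nonempty Ω] (h : IsRevMC P pi) (h1 : 1 ≤ aveMix P pi (7 / 8)) :
    aveMix P pi (7 / 8) + 1 ≤ aveMix P pi (1 / 8) := by
  have hp := h.1.2.2.1
  have hs := h.1.1
  by_contra hcon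
  push Not at hcon
  obtain ⟨T, hT⟩ : ∃ T, aveMix P pi (7 / 8) = T + 1 := ⟨aveMix P pi (7 / 8) - 1, by omega⟩
  have h2 : ∀ x, tvDist (aK P (T + 1) x) pi ≤ 1 / 8 := fun x =>
    (ave_mono hs h.1.2.2.2 x (by omega : aveMix P pi (1 / 8) ≤ T + 1)).trans
      (aveMix_spec h (by norm_num) x)
  have h3 : aveMix P pi (7 / 8) ≤ T := by
    refine aveMix_le fun x => ?_
    have h4 := h2 x
    rw [tv_eq (aK_prob hs _ x) hp] at h4 ⊢
    have h5 : ∑ y, min (aK P (T + 1) x y) (pi y)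
        ≤ ∑ y, (min (aK P T x y) (pi y) + (P ^ (T + 2)) x y / 2) := by
      refine Finset.sum_le_sum fun y _ => ?_
      have a0 := (pow_stoch hs T).1 x y
      have a2 := (pow_stoch hs (T + 2)).1 x y
      rw [← min_add_add_right]
      refine min_le_min ?_ (by linarith)
      unfold aK
      rw [show T + 1 + 1 = T + 2 from rfl]
      linarith
    rw [Finset.sum_add_distrib, ← Finset.sum_div, (pow_stoch hs (T + 2)).2] at h5
    linarith
  omega

end chain

lemma asymp_core {T c : ℝ → ℕ → ℝ}
    (hcut : ∀ ε : ℝ, 0 < ε → ε < 1 → Tendsto (fun n => T ε n / T (1 - ε) n) atTop (nhds 1))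
    (hT0 : ∀ ε n, 0 ≤ T ε n)
    (hTa : ∀ ε η n, 0 < ε → ε ≤ η → T η n ≤ T ε n)
    (hdbl : ∀ n, T (7 / 8) n ≠ 0 → T (7 / 8) n + 1 ≤ T (1 / 8) n)
    (hb : ∀ η ε : ℝ, 0 < η → η < ε → ε ≤ 1 → ∃ C : ℝ, 0 < C ∧ ∀ n,
      c ε n ≤ T η n + C * (√(T η n) + 1) ∧ T ε n - C * (√(T ε n) + 1) ≤ c η n) :
    Tendsto (fun n => T (1 / 4) n) atTop atTop ∧
    (∀ ε : ℝ, 0 < ε → ε < 1 → Tendsto (fun n => T ε n / T (1 / 4) n) atTop (nhds 1)) ∧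
    (∀ ε : ℝ, 0 < ε → ε < 1 → Tendsto (fun n => c ε n / T (1 / 4) n) atTop (nhds 1)) := by
  have hinf : Tendsto (fun n => T (1 / 4) n) atTop atTop := by
    rw [tendsto_atTop]
    intro M0
    set M := max M0 1 with hM
    have hM1 : 1 ≤ M := le_max_right _ _
    have h1 := hcut (1 / 8) (by norm_num) (by norm_num)
    rw [show (1 : ℝ) - 1 / 8 = 7 / 8 by norm_num] at h1
    have hMp : (1 : ℝ) < 1 + 1 / M := by
      have : 0 < 1 / M := by positivity
      linarith
    filter_upwards [h1.eventually_lt_const hMp, h1.eventually_const_lt (show (0 : ℝ) < 1 by norm_num)]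
      with n hn1 hn2
    have hne : T (7 / 8) n ≠ 0 := by
      intro h0
      rw [h0, div_zero] at hn2
      exact lt_irrefl _ hn2
    have hpos : 0 < T (7 / 8) n := lt_of_le_of_ne (hT0 _ _) hne.symm
    have hd := hdbl n hne
    rw [div_lt_iff₀ hpos] at hn1
    have h3 : 1 < T (7 / 8) n / M := by
      have e : (1 + 1 / M) * T (7 / 8) n = T (7 / 8) n + T (7 / 8) n / M := by ring
      linarith
    rw [lt_div_iff₀ (by linarith)] at h3
    have h4 := hTa (1 / 4) (7 / 8) n (by norm_num) (by norm_num)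
    linarith [le_max_left M0 1]
  have hTr : ∀ ε : ℝ, 0 < ε → ε < 1 → Tendsto (fun n => T ε n / T (1 / 4) n) atTop (nhds 1) := by
    intro ε he0 he1
    set η := min (min ε (1 - ε)) (1 / 4) with hη
    have n1 : η ≤ ε := (min_le_left _ _).trans (min_le_left _ _)
    have n2 : η ≤ 1 - ε := (min_le_left _ _).trans (min_le_right _ _)
    have n3 : η ≤ 1 / 4 := min_le_right _ _
    have n0 : 0 < η := lt_min (lt_min he0 (by linarith)) (by norm_num)
    have h1 := hcut η n0 (by linarith)
    have h2 := h1.inv₀ one_ne_zero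
    rw [inv_one] at h2
    have hev : ∀ᶠ n in atTop, 0 < T (1 - η) n := by
      filter_upwards [h1.eventually_const_lt (show (0 : ℝ) < 1 by norm_num)] with n hn
      refine lt_of_le_of_ne (hT0 _ _) fun h0 => ?_
      rw [← h0, div_zero] at hn
      exact lt_irrefl _ hn
    refine tendsto_of_tendsto_of_tendsto_of_le_of_le' h2 h1 ?_ ?_
    · filter_upwards [hev] with n hn
      rw [inv_div]
      have a1 := hTa ε (1 - η) n he0 (by linarith)
      have a2 := hTa η (1 / 4) n n0 n3
      have a3 := hTa (1 / 4) (1 - η) n (by norm_num) (by linarith)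
      exact div_le_div₀ (hT0 _ _) a1 (by linarith) a2
    · filter_upwards [hev] with n hn
      have a1 := hTa η ε n n0 n1
      have a3 := hTa (1 / 4) (1 - η) n (by norm_num) (by linarith)
      exact div_le_div₀ (hT0 _ _) a1 hn a3
  refine ⟨hinf, hTr, ?_⟩
  have hinv : Tendsto (fun n => 1 / T (1 / 4) n) atTop (nhds 0) := by
    refine hinf.inv_tendsto_atTop.congr fun n => ?_
    rw [Pi.inv_apply, one_div (T (1 / 4) n)]
  have hsq : ∀ ε : ℝ, 0 < ε → ε < 1 →
      Tendsto (fun n => √(T ε n) / T (1 / 4) n) atTop (nhds 0) := by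
    intro ε he0 he1
    have h1 := ((hTr ε he0 he1).mul hinv).sqrt
    rw [mul_zero, Real.sqrt_zero] at h1
    refine h1.congr' ?_
    filter_upwards [hinf.eventually_gt_atTop 0] with n hn
    have e : T ε n / T (1 / 4) n * (1 / T (1 / 4) n) = T ε n / (T (1 / 4) n) ^ 2 := by
      field_simp
    rw [e, Real.sqrt_div (hT0 _ _), Real.sqrt_sq hn.le]
  have herr : ∀ ε C : ℝ, 0 < ε → ε < 1 →
      Tendsto (fun n => C * (√(T ε n) / T (1 / 4) n + 1 / T (1 / 4) n)) atTop (nhds 0) := by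
    intro ε C he0 he1
    simpa using ((hsq ε he0 he1).add hinv).const_mul C
  intro ε he0 he1
  obtain ⟨C1, hC1, hu⟩ := hb (ε / 2) ε (by linarith) (by linarith) he1.le
  obtain ⟨C2, hC2, hl⟩ := hb ε ((1 + ε) / 2) he0 (by linarith) (by linarith)
  have lim1 := (hTr (ε / 2) (by linarith) (by linarith)).add
    (herr (ε / 2) C1 (by linarith) (by linarith))
  have lim2 := (hTr ((1 + ε) / 2) (by linarith) (by linarith)).sub
    (herr ((1 + ε) / 2) C2 (by linarith) (by linarith))
  rw [add_zero] at lim1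
  rw [sub_zero] at lim2
  refine tendsto_of_tendsto_of_tendsto_of_le_of_le' lim2 lim1 ?_ ?_
  · filter_upwards [hinf.eventually_gt_atTop 0] with n hn
    have := div_le_div_of_nonneg_right (hl n).2 hn.le
    refine le_trans (le_of_eq ?_) this
    ring
  · filter_upwards [hinf.eventually_gt_atTop 0] with n hn
    have := div_le_div_of_nonneg_right (hu n).1 hn.le
    refine le_trans this (le_of_eq ?_)
    ring

lemma exists_const_of_eventually {a b : ℕ → ℝ} (hb : ∀ n, 0 ≤ b n) {C : ℝ}
    (hev : ∀ᶠ n in atTop, a n ≤ C * b n) (hall : ∀ n, ∃ D : ℝ, a n ≤ D * b n) :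
    ∃ C' : ℝ, 0 < C' ∧ ∀ n, a n ≤ C' * b n := by
  choose D hD using hall
  obtain ⟨N, hN⟩ := eventually_atTop.1 hev
  refine ⟨|C| + ∑ n ∈ Finset.range N, |D n| + 1, by positivity, fun n => ?_⟩
  have hs : 0 ≤ ∑ n ∈ Finset.range N, |D n| := Finset.sum_nonneg fun _ _ => abs_nonneg _
  rcases lt_or_ge n N with hn | hn
  · refine (hD n).trans (mul_le_mul_of_nonneg_right ?_ (hb n))
    have := Finset.single_le_sum (f := fun n => |D n|) (fun _ _ => abs_nonneg _)
      (Finset.mem_range.2 hn)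
    linarith [le_abs_self (D n), abs_nonneg C]
  · refine (hN n hn).trans (mul_le_mul_of_nonneg_right ?_ (hb n))
    linarith [le_abs_self C]

/-- **Theorem 3 (ii) of Hermon–Peres.**
If a sequence of finite irreducible reversible Markov chains exhibits an averaged cutoff
with window `w`, then it exhibits a continuous-time cutoff with window
`w'_n = max (w_n, √(t_c^{(n)}))`. -/
theorem contCutoffWindow_of_aveCutoffWindow :
    ∀ (Ω : ℕ → Type) [∀ n, Fintype (Ω n)] [∀ n, DecidableEq (Ω n)] [∀ n, Nonempty (Ω n)]
      (P : ∀ n, Matrix (Ω n) (Ω n) ℝ) (pi : ∀ n, Ω n → ℝ) (w : ℕ → ℝ),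
      (∀ n, IsRevMC (P n) (pi n)) →
      AveCutoffWindow P pi w →
      ContCutoffWindow P pi
        (fun n => max (w n) (Real.sqrt (contMix (P n) (pi n) (1 / 4)))) := by

  intro Ω _ _ _ P pi w hMC hcw
  obtain ⟨hcut, hlo, hwin⟩ := hcw
  set T : ℝ → ℕ → ℝ := fun ε n => (aveMix (P n) (pi n) ε : ℝ) with hT
  set c : ℝ → ℕ → ℝ := fun ε n => contMix (P n) (pi n) ε with hc
  have hT0 : ∀ ε n, 0 ≤ T ε n := fun ε n => Nat.cast_nonneg _
  have hTa : ∀ ε η n, 0 < ε → ε ≤ η → T η n ≤ T ε n := fun ε η n h1 h2 =>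
    Nat.cast_le.2 (aveMix_anti (hMC n) h1 h2)
  have hca : ∀ ε η n, 0 < ε → ε ≤ η → c η n ≤ c ε n := fun ε η n h1 h2 =>
    contMix_anti (hMC n) h1 h2
  have hc0 : ∀ ε n, 0 ≤ c ε n := fun ε n => contMix_nonneg _
  have hdbl : ∀ n, T (7 / 8) n ≠ 0 → T (7 / 8) n + 1 ≤ T (1 / 8) n := by
    intro n hn
    have h1 : aveMix (P n) (pi n) (7 / 8) ≠ 0 := fun h0 => hn (by simp only [hT, h0, Nat.cast_zero])
    have := aveMix_double (hMC n) (Nat.one_le_iff_ne_zero.2 h1)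
    simp only [hT]
    exact_mod_cast this
  have hb : ∀ η ε : ℝ, 0 < η → η < ε → ε ≤ 1 → ∃ C : ℝ, 0 < C ∧ ∀ n,
      c ε n ≤ T η n + C * (√(T η n) + 1) ∧ T ε n - C * (√(T ε n) + 1) ≤ c η n := by
    intro η ε h0 h1 h2
    have hd : 0 < ε - η := by linarith
    have hd1 : ε - η ≤ 1 := by linarith
    have p1 : 0 < 4 / (ε - η) ^ 2 := by positivity
    have p2 : 0 < cLow (ε - η) := by unfold cLow; positivity
    refine ⟨4 / (ε - η) ^ 2 + cLow (ε - η), by linarith, fun n => ⟨?_, ?_⟩⟩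
    · have h3 := contMix_le (hMC n) h0 hd hd1
      rw [add_sub_cancel] at h3
      refine h3.trans (add_le_add le_rfl (mul_le_mul_of_nonneg_right (by linarith) (by positivity)))
    · have h3 := le_contMix (hMC n) h0 hd hd1
      rw [add_sub_cancel] at h3
      refine le_trans (sub_le_sub le_rfl
        (mul_le_mul_of_nonneg_right (by linarith) (by positivity))) h3
  obtain ⟨hinf, hTr, hcr⟩ := asymp_core hcut hT0 hTa hdbl hb
  have hq0 : (0 : ℝ) < 1 / 4 := by norm_num
  have hq1 : (1 / 4 : ℝ) < 1 := by norm_num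
  have hcinf : Tendsto (fun n => c (1 / 4) n) atTop atTop := by
    have h1 := (hcr (1 / 4) hq0 hq1).pos_mul_atTop one_pos hinf
    refine h1.congr' ?_
    filter_upwards [hinf.eventually_gt_atTop 0] with n hn
    field_simp
  refine ⟨?_, ?_, ?_⟩
  · intro ε he0 he1
    have h1 := (hcr ε he0 he1).div (hcr (1 - ε) (by linarith) (by linarith)) one_ne_zero
    rw [div_one] at h1
    refine h1.congr' ?_
    filter_upwards [hinf.eventually_gt_atTop 0] with n hn
    exact div_div_div_cancel_right₀ hn.ne' _ _
  · have hGO : (fun n => T (1 / 4) n) =O[atTop] (fun n => c (1 / 4) n) := by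
      refine IsBigO.of_bound 2 ?_
      filter_upwards [(hcr (1 / 4) hq0 hq1).eventually_const_lt
        (show (1 / 2 : ℝ) < 1 by norm_num), hinf.eventually_gt_atTop 0] with n h1 h2
      rw [lt_div_iff₀ h2] at h1
      rw [Real.norm_of_nonneg (hT0 _ _), Real.norm_of_nonneg (hc0 _ _)]
      linarith
    have h1 : (fun n => w n) =o[atTop] (fun n => c (1 / 4) n) := hlo.trans_isBigO hGO
    have h2 : (fun n => √(c (1 / 4) n)) =o[atTop] (fun n => c (1 / 4) n) := by
      rw [isLittleO_iff]
      intro e he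
      filter_upwards [hcinf.eventually_ge_atTop ((1 / e) ^ 2), hcinf.eventually_gt_atTop 0]
        with n h3 h4
      rw [Real.norm_of_nonneg (Real.sqrt_nonneg _), Real.norm_of_nonneg h4.le]
      have h5 : 1 / e ≤ √(c (1 / 4) n) := Real.le_sqrt_of_sq_le h3
      rw [div_le_iff₀ he] at h5
      have h6 : √(c (1 / 4) n) * √(c (1 / 4) n) = c (1 / 4) n := Real.mul_self_sqrt h4.le
      have h7 := mul_le_mul_of_nonneg_right h5 (Real.sqrt_nonneg (c (1 / 4) n))
      nlinarith
    have h3 := h1.norm_left.add h2.norm_left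
    refine IsBigO.trans_isLittleO (IsBigO.of_bound 1 (Eventually.of_forall fun n => ?_)) h3
    simp only [Real.norm_eq_abs, one_mul]
    rw [abs_of_nonneg (add_nonneg (abs_nonneg (w n)) (abs_nonneg (√(c (1 / 4) n))))]
    refine abs_max_le_max_abs_abs.trans (max_le ?_ ?_)
    · linarith [abs_nonneg (√(c (1 / 4) n))]
    · exact le_add_of_nonneg_left (abs_nonneg _)
  · intro ε he0 he1
    have hw0 : ∀ n, 0 ≤ max (w n) (√(c (1 / 4) n)) := fun n =>
      (Real.sqrt_nonneg _).trans (le_max_right _ _)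
    obtain ⟨C0, hC0, hw⟩ := hwin (ε / 2) (by linarith) (by linarith)
    obtain ⟨C1, hC1, hu⟩ := hb (ε / 2) ε (by linarith) (by linarith) (by linarith)
    obtain ⟨C2, hC2, hl⟩ := hb (1 - ε) (1 - ε / 2) (by linarith) (by linarith) (by linarith)
    refine exists_const_of_eventually (a := fun n => c ε n - c (1 - ε) n)
      (C := C0 + (C1 + C2) * 3) hw0 ?_ ?_
    · filter_upwards [hinf.eventually_gt_atTop 0, hcinf.eventually_ge_atTop 1,
        (hTr (ε / 2) (by linarith) (by linarith)).eventually_lt_const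
          (show (1 : ℝ) < 2 by norm_num),
        (hcr (1 / 4) hq0 hq1).eventually_const_lt
          (show (1 / 2 : ℝ) < 1 by norm_num)] with n h1 h2 h3 h4
      rw [lt_div_iff₀ h1] at h4
      rw [div_lt_iff₀ h1] at h3
      have h5 : √(T (ε / 2) n) ≤ 2 * √(c (1 / 4) n) := by
        have : T (ε / 2) n ≤ 2 ^ 2 * c (1 / 4) n := by linarith
        refine (Real.sqrt_le_sqrt this).trans_eq ?_
        rw [Real.sqrt_mul (by norm_num), Real.sqrt_sq (by norm_num)]
      have h6 : √(T (1 - ε / 2) n) ≤ √(T (ε / 2) n) :=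
        Real.sqrt_le_sqrt (hTa _ _ n (by linarith) (by linarith))
      have h7 : 1 ≤ √(c (1 / 4) n) := Real.one_le_sqrt.2 h2
      have h8 : √(c (1 / 4) n) ≤ max (w n) (√(c (1 / 4) n)) := le_max_right _ _
      have h9 : w n ≤ max (w n) (√(c (1 / 4) n)) := le_max_left _ _
      have k0 := hw n
      have k1 := (hu n).1
      have k2 := (hl n).2
      set W := max (w n) (√(c (1 / 4) n))
      have m0 : C0 * w n ≤ C0 * W := mul_le_mul_of_nonneg_left h9 hC0.le
      have m1 : C1 * (√(T (ε / 2) n) + 1) ≤ C1 * (3 * W) :=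
        mul_le_mul_of_nonneg_left (by linarith) hC1.le
      have m2 : C2 * (√(T (1 - ε / 2) n) + 1) ≤ C2 * (3 * W) :=
        mul_le_mul_of_nonneg_left (by linarith) hC2.le
      have k0' : T (ε / 2) n - T (1 - ε / 2) n ≤ C0 * w n := k0
      linarith
    · intro n
      rcases eq_or_lt_of_le (hc0 (1 / 4) n) with h0 | h0
      · refine ⟨0, ?_⟩
        have h1 : c ε n = 0 := contMix_triv (hMC n) h0.symm he0
        have h2 := hc0 (1 - ε) n
        rw [h1, zero_mul]
        linarith
      · have hpos : 0 < max (w n) (√(c (1 / 4) n)) :=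
          lt_of_lt_of_le (Real.sqrt_pos.2 h0) (le_max_right _ _)
        refine ⟨(c ε n - c (1 - ε) n) / max (w n) (√(c (1 / 4) n)), ?_⟩
        rw [div_mul_cancel₀ _ hpos.ne']
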